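/- Let S be a numerical semigroup. Then (𝔑(S), ⪯) is a lattice (every pair of normalized ideals of S has a supremum and an infimum with respect to ⪯) if and only if m(S) ≤ 4. -/

import Mathlib

open Pointwise

/-- A numerical semigroup: an additive submonoid of `ℕ` with finite complement. -/
def IsNumericalSemigroup (S : Set ℕ) : Prop :=
  0 ∈ S ∧ (∀ a ∈ S, ∀ b ∈ S, a + b ∈ S) ∧ Sᶜ.Finite

/-- A normalized (relative) ideal of `S`: a subset of `ℕ` with `min I = 0`
(equivalently `0 ∈ I`) satisfying `I + S ⊆ I`. -/
def IsNormalizedIdeal (S I : Set ℕ) : Prop :=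
  0 ∈ I ∧ ∀ i ∈ I, ∀ s ∈ S, i + s ∈ I

/-- The set `𝔑(S)` of normalized ideals of `S`. -/
def NI (S : Set ℕ) : Set (Set ℕ) := {I : Set ℕ | IsNormalizedIdeal S I}

/-- The multiplicity of `S`: its least nonzero element. -/
noncomputable def multNS (S : Set ℕ) : ℕ := sInf {n : ℕ | n ∈ S ∧ n ≠ 0}

/-- The Frobenius number of `S` (or of an ideal): the largest natural number not in `S`. -/
noncomputable def frobNS (S : Set ℕ) : ℕ := sSup Sᶜ

/-- A minimal generator of `S`: a nonzero element of `S` that is not the sum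
of two nonzero elements of `S`. -/
def IsMinimalGenerator (S : Set ℕ) (a : ℕ) : Prop :=
  a ∈ S ∧ a ≠ 0 ∧ ¬ ∃ b ∈ S, ∃ c ∈ S, b ≠ 0 ∧ c ≠ 0 ∧ a = b + c

/-- A minimal generator of an ideal `I` of a numerical semigroup `T`:
an element `x ∈ I` with `x ≠ y + t` for every `y ∈ I` and nonzero `t ∈ T`. -/
def IsMinGenOfIdeal (T I : Set ℕ) (x : ℕ) : Prop :=
  x ∈ I ∧ ∀ y ∈ I, ∀ t ∈ T, t ≠ 0 → x ≠ y + t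

/-- The order `⪯` on normalized ideals: `I ⪯ J` iff `I + K = J` for some `K ∈ 𝔑(S)`. -/
def Preceq (S I J : Set ℕ) : Prop :=
  ∃ K : Set ℕ, IsNormalizedIdeal S K ∧ I + K = J

/-- `M` is the supremum of `{I, J}` in `(𝔑(S), ⪯)`. -/
def IsSupNI (S I J M : Set ℕ) : Prop :=
  IsNormalizedIdeal S M ∧ Preceq S I M ∧ Preceq S J M ∧
    ∀ L : Set ℕ, IsNormalizedIdeal S L → Preceq S I L → Preceq S J L → Preceq S M L

/-- `M` is the infimum of `{I, J}` in `(𝔑(S), ⪯)`. -/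
def IsInfNI (S I J M : Set ℕ) : Prop :=
  IsNormalizedIdeal S M ∧ Preceq S M I ∧ Preceq S M J ∧
    ∀ L : Set ℕ, IsNormalizedIdeal S L → Preceq S L I → Preceq S L J → Preceq S L M

/-- `(𝔑(S), ⪯)` is a lattice: every pair of normalized ideals has a supremum
and an infimum with respect to `⪯`. -/
def NILattice (S : Set ℕ) : Prop :=
  ∀ I J : Set ℕ, IsNormalizedIdeal S I → IsNormalizedIdeal S J →
    (∃ M : Set ℕ, IsSupNI S I J M) ∧ (∃ M : Set ℕ, IsInfNI S I J M)

/-- The ordinary numerical semigroup `H_m = {0} ∪ {n : n ≥ m}`. -/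
def ordinaryNS (m : ℕ) : Set ℕ := {0} ∪ {n : ℕ | m ≤ n}

/-- `I ∈ 𝔑(S) \ {S}` is `+`-irreducible if `I = J + K` with `J, K ∈ 𝔑(S)`
implies `I = J` or `I = K`. -/
def PlusIrreducible (S I : Set ℕ) : Prop :=
  IsNormalizedIdeal S I ∧ I ≠ S ∧
    ∀ J K : Set ℕ, IsNormalizedIdeal S J → IsNormalizedIdeal S K → I = J + K → I = J ∨ I = K

/-!
`I ⪯ J` says that `J` is a union of translates of `I`. Suppose `m = m(S) ≤ 4` and let `A`, `B` be
normalized ideals containing every integer above `f`. Adjoining `f` is harmless for upper bounds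
that contain `f`: if `A ⪯ C` and `f ∈ C`, then `A ⪯ A ∪ {f} ⪯ C`. So if all common upper bounds of
`A` and `B` contain `f`, their supremum is that of `A ∪ {f}` and `B ∪ {f}`, and one can induct on
`f`. Otherwise some common upper bound avoids `f`, which leaves only the residue classes modulo `m`
other than those of `0` and `f` to consider, and the supremum is `A ∪ B` or `A + B`; the sum occurs
only for `m = 4` and `f` odd, where an ideal is given by two coordinates. Infima follow from
suprema because `𝔑(S)` is finite with least element `S`. If `m ≥ 5`, the ideals `{2, 4}ᶜ` and
`{2, 3, 4}ᶜ` have no supremum.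
-/

/-- `c` lies on a translate of `I` by a natural number that is contained in `J`; the relation
`I ⪯ J` says that `J` is a union of such translates. -/
def CoveredBy (I J : Set ℕ) (c : ℕ) : Prop :=
  ∃ i ∈ I, ∃ k, i + k = c ∧ ∀ x ∈ I, x + k ∈ J

section NormalizedIdeals

variable {S I J A B C : Set ℕ} {m f c k n t x y u v : ℕ}

theorem CoveredBy.of_mem (hIJ : I ⊆ J) (hc : c ∈ I) : CoveredBy I J c :=
  ⟨c, hc, 0, rfl, fun _ hx => hIJ hx⟩

theorem CoveredBy.of_forall_add_mem (h0 : 0 ∈ I) (h : ∀ x ∈ I, x + c ∈ J) : CoveredBy I J c :=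
  ⟨0, h0, c, zero_add c, h⟩

namespace IsNormalizedIdeal

theorem subset (hI : IsNormalizedIdeal S I) : S ⊆ I :=
  fun s hs => by simpa only [zero_add] using hI.2 0 hI.1 s hs

theorem union (hI : IsNormalizedIdeal S I) (hJ : IsNormalizedIdeal S J) :
    IsNormalizedIdeal S (I ∪ J) :=
  ⟨.inl hI.1, fun _ hi s hs => hi.imp (hI.2 _ · s hs) (hJ.2 _ · s hs)⟩

theorem add (hI : IsNormalizedIdeal S I) (hJ : IsNormalizedIdeal S J) :
    IsNormalizedIdeal S (I + J) := by
  refine ⟨⟨0, hI.1, 0, hJ.1, rfl⟩, ?_⟩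
  rintro _ ⟨i, hi, j, hj, rfl⟩ s hs
  exact ⟨i, hi, j + s, hJ.2 j hj s hs, (add_assoc i j s).symm⟩

theorem mem_of_mod_eq (hI : IsNormalizedIdeal S I) (hm : m ∈ S) (hn : n ∈ I) (hnt : n ≤ t)
    (hmod : n % m = t % m) : t ∈ I := by
  have add_mul_mem : ∀ q, n + m * q ∈ I := by
    intro q
    induction q with
    | zero => simpa only [mul_zero, add_zero] using hn
    | succ q ih => simpa only [Nat.mul_succ, add_assoc] using hI.2 _ ih m hm
  obtain ⟨q, hq⟩ := (Nat.modEq_iff_dvd' hnt).1 hmod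
  have ht : n + m * q = t := by omega
  exact ht ▸ add_mul_mem q

theorem lt_of_mem_of_mod_eq (hI : IsNormalizedIdeal S I) (hm : m ∈ S) (hf : f ∉ I) (hn : n ∈ I)
    (hmod : n % m = f % m) : f < n :=
  not_le.1 fun hnf => hf (hI.mem_of_mod_eq hm hn hnf hmod)

theorem mod_ne_zero (hI : IsNormalizedIdeal S I) (hm : m ∈ S) (hf : f ∉ I) : f % m ≠ 0 :=
  fun h => hf (hI.mem_of_mod_eq hm hI.1 f.zero_le (by rw [h, Nat.zero_mod]))

end IsNormalizedIdeal

theorem IsNumericalSemigroup.isNormalizedIdeal_self (hS : IsNumericalSemigroup S) :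
    IsNormalizedIdeal S S :=
  ⟨hS.1, hS.2.1⟩

theorem Preceq.subset (h : Preceq S I J) : I ⊆ J := by
  obtain ⟨K, hK, rfl⟩ := h
  exact fun i hi => ⟨i, hi, 0, hK.1, add_zero i⟩

theorem preceq_iff_coveredBy (hI : IsNormalizedIdeal S I) :
    Preceq S I J ↔ I ⊆ J ∧ ∀ c ∈ J, CoveredBy I J c := by
  constructor
  · refine fun h => ⟨h.subset, ?_⟩
    obtain ⟨K, -, rfl⟩ := h
    rintro _ ⟨i, hi, k, hk, rfl⟩
    exact ⟨i, hi, k, rfl, fun x hx => Set.add_mem_add hx hk⟩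
  · rintro ⟨hIJ, hcov⟩
    refine ⟨{k | ∀ x ∈ I, x + k ∈ J}, ⟨fun x hx => hIJ hx, fun k hk s hs x hx => ?_⟩, ?_⟩
    · rw [← add_assoc, add_right_comm]
      exact hk _ (hI.2 x hx s hs)
    · ext c
      constructor
      · rintro ⟨i, hi, k, hk, rfl⟩
        exact hk i hi
      · intro hc
        obtain ⟨i, hi, k, hik, hk⟩ := hcov c hc
        exact ⟨i, hi, k, hk, hik⟩

namespace Preceq

theorem coveredBy (h : Preceq S I J) (hI : IsNormalizedIdeal S I) (hc : c ∈ J) :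
    CoveredBy I J c :=
  ((preceq_iff_coveredBy hI).1 h).2 c hc

theorem isNormalizedIdeal (h : Preceq S I J) (hI : IsNormalizedIdeal S I) :
    IsNormalizedIdeal S J := by
  obtain ⟨K, hK, rfl⟩ := h
  exact hI.add hK

theorem trans (hIJ : Preceq S I J) (hJC : Preceq S J C) : Preceq S I C := by
  obtain ⟨K, hK, rfl⟩ := hIJ
  obtain ⟨L, hL, rfl⟩ := hJC
  exact ⟨K + L, hK.add hL, (add_assoc I K L).symm⟩

end Preceq

instance : IsTrans (Set ℕ) (Preceq S) := ⟨fun _ _ _ => Preceq.trans⟩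

theorem preceq_add_right (hJ : IsNormalizedIdeal S J) : Preceq S I (I + J) :=
  ⟨J, hJ, rfl⟩

theorem preceq_add_left (hI : IsNormalizedIdeal S I) : Preceq S J (I + J) :=
  ⟨I, hI, add_comm J I⟩

theorem preceq_refl (hI : IsNormalizedIdeal S I) : Preceq S I I :=
  (preceq_iff_coveredBy hI).2 ⟨subset_rfl, fun _ => .of_mem subset_rfl⟩

theorem self_preceq (hS : IsNumericalSemigroup S) (hI : IsNormalizedIdeal S I) :
    Preceq S S I :=
  (preceq_iff_coveredBy hS.isNormalizedIdeal_self).2 ⟨hI.subset, fun c hc =>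
    .of_forall_add_mem hS.1 fun s hs => add_comm c s ▸ hI.2 c hc s hs⟩

theorem preceq_of_translate (hI : IsNormalizedIdeal S I) (hIJ : I ⊆ J)
    (hadd : ∀ x ∈ I, x + k ∈ J) (hsub : ∀ c ∈ J, c ∉ I → k ≤ c ∧ c - k ∈ I) : Preceq S I J := by
  refine (preceq_iff_coveredBy hI).2 ⟨hIJ, fun c hc => ?_⟩
  by_cases hcI : c ∈ I
  · exact .of_mem hIJ hcI
  · obtain ⟨hkc, hck⟩ := hsub c hc hcI
    exact ⟨c - k, hck, k, Nat.sub_add_cancel hkc, hadd⟩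

theorem preceq_of_forall_minimal (hI : IsNormalizedIdeal S I) (hJ : IsNormalizedIdeal S J)
    (hm : m ∈ S) (hIJ : I ⊆ J)
    (hcov : ∀ c ∈ J, (∀ d ∈ J, d % m = c % m → c ≤ d) → CoveredBy I J c) : Preceq S I J := by
  classical
  refine (preceq_iff_coveredBy hI).2 ⟨hIJ, fun c hc => ?_⟩
  have hclass : ∃ d, d ∈ J ∧ d % m = c % m := ⟨c, hc, rfl⟩
  obtain ⟨hdJ, hdc⟩ := Nat.find_spec hclass
  obtain ⟨i, hi, k, hik, hk⟩ := hcov (Nat.find hclass) hdJ fun d hd hdmod =>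
    Nat.find_min' hclass ⟨hd, hdmod.trans hdc⟩
  have hle : Nat.find hclass ≤ c := Nat.find_min' hclass ⟨hc, rfl⟩
  refine ⟨i, hi, k + (c - Nat.find hclass), by omega, fun x hx => ?_⟩
  have hsub : c - Nat.find hclass ≡ 0 [MOD m] :=
    (Nat.modEq_zero_iff_dvd).2 ((Nat.modEq_iff_dvd' hle).1 hdc)
  rw [← add_assoc]
  exact hJ.mem_of_mod_eq hm (hk x hx) (Nat.le_add_right _ _) (hsub.add_left (x + k)).symm

/-! ### Adjoining the Frobenius number -/

theorem IsNormalizedIdeal.insert (hI : IsNormalizedIdeal S I) (hIf : Set.Ioi f ⊆ I) :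
    IsNormalizedIdeal S (insert f I) := by
  refine ⟨.inr hI.1, ?_⟩
  rintro i (rfl | hi) s hs
  · obtain rfl | hpos := s.eq_zero_or_pos
    · exact .inl rfl
    · exact .inr (hIf (Nat.lt_add_of_pos_right hpos))
  · exact .inr (hI.2 i hi s hs)

theorem preceq_insert (hI : IsNormalizedIdeal S I) (hIf : Set.Ioi f ⊆ I) :
    Preceq S I (insert f I) := by
  refine preceq_of_translate (k := f) hI (Set.subset_insert f I) (fun x _ => ?_) ?_
  · obtain rfl | hpos := x.eq_zero_or_pos
    · exact .inl (zero_add f)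
    · exact .inr (hIf (Nat.lt_add_of_pos_left hpos))
  · rintro c (rfl | hc) hcI
    · exact ⟨le_rfl, (Nat.sub_self c).symm ▸ hI.1⟩
    · exact absurd hc hcI

theorem Preceq.insert_left (h : Preceq S I C) (hI : IsNormalizedIdeal S I)
    (hIf : Set.Ioi f ⊆ I) (hfC : f ∈ C) : Preceq S (insert f I) C := by
  refine (preceq_iff_coveredBy (hI.insert hIf)).2
    ⟨Set.insert_subset hfC h.subset, fun c hc => ?_⟩
  obtain ⟨i, hi, k, hik, hk⟩ := h.coveredBy hI hc
  refine ⟨i, .inr hi, k, hik, ?_⟩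
  rintro x (rfl | hx)
  · obtain rfl | hpos := k.eq_zero_or_pos
    · exact hfC
    · exact h.subset (hIf (Nat.lt_add_of_pos_right hpos))
  · exact hk x hx

theorem Ici_subset_insert (hIf : Set.Ioi f ⊆ I) : Set.Ici f ⊆ insert f I := by
  rw [← Set.Ioi_insert]
  exact Set.insert_subset_insert hIf

/-! ### Residue classes modulo the multiplicity -/

theorem IsNormalizedIdeal.exists_class_min (hI : IsNormalizedIdeal S I) (hm : m ∈ S)
    (hIf : Set.Ioi f ⊆ I) {r : ℕ} (hr : r < m) :
    ∃ x, x % m = r ∧ x ≤ f + m ∧ ∀ n, n % m = r → (n ∈ I ↔ x ≤ n) := by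
  classical
  have hmod : (f + m - (f + m - r) % m) % m = r := by
    have := Nat.div_add_mod (f + m - r) m
    rw [show f + m - (f + m - r) % m = r + m * ((f + m - r) / m) by omega,
      Nat.add_mul_mod_self_left, Nat.mod_eq_of_lt hr]
  have hgt : f < f + m - (f + m - r) % m := by
    have := Nat.mod_lt (f + m - r) (Nat.zero_lt_of_lt hr)
    omega
  have hclass : ∃ n, n ∈ I ∧ n % m = r := ⟨_, hIf hgt, hmod⟩
  obtain ⟨hxI, hx⟩ := Nat.find_spec hclass
  refine ⟨Nat.find hclass, hx, ?_, fun n hn => ⟨fun hnI => Nat.find_min' hclass ⟨hnI, hn⟩,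
    fun hle => hI.mem_of_mod_eq hm hxI hle (hx.trans hn.symm)⟩⟩
  exact (Nat.find_min' hclass ⟨hIf hgt, hmod⟩).trans (Nat.sub_le _ _)

/-- Modulo `m`, two residues other than those of `0` and `f` always add up to the residue of `0`
or of `f`. For `m ≤ 4` and `m ∤ f` this fails only if `m = 4` and `f` is odd. -/
def SumsCollapse (m f : ℕ) : Prop :=
  ∀ i j, i % m ≠ 0 → i % m ≠ f % m → j % m ≠ 0 → j % m ≠ f % m →
    (i + j) % m = 0 ∨ (i + j) % m = f % m

theorem sumsCollapse_or_odd (hm0 : m ≠ 0) (hm4 : m ≤ 4) (hf : f % m ≠ 0) :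
    SumsCollapse m f ∨ m = 4 ∧ f % 2 = 1 := by
  unfold SumsCollapse
  by_cases hodd : m = 4 ∧ f % 2 = 1
  · exact .inr hodd
  · left
    intro i j
    interval_cases m <;> omega

theorem IsNormalizedIdeal.mem_of_mod_eq_zero_or (hC : IsNormalizedIdeal S C) (hm : m ∈ S)
    (hfC : f ∉ C) (hA : IsNormalizedIdeal S A) (hAf : Set.Ioi f ⊆ A) (hn : n ∈ C)
    (hmod : n % m = 0 ∨ n % m = f % m) : n ∈ A := by
  obtain h | h := hmod
  · exact hA.mem_of_mod_eq hm hA.1 n.zero_le (by rw [h, Nat.zero_mod])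
  · exact hAf (hC.lt_of_mem_of_mod_eq hm hfC hn h)

namespace SumsCollapse

theorem add_mem (h : SumsCollapse m f) (hm : m ∈ S) (hA : IsNormalizedIdeal S A)
    (hAf : Set.Ioi f ⊆ A) (hAC : Preceq S A C) (hfC : f ∉ C) (hc : c ∈ C) (hcA : c ∉ A)
    (hn : n ∈ A) : n + c ∈ C := by
  have hC := hAC.isNormalizedIdeal hA
  have hmem : ∀ d ∈ C, d % m = 0 ∨ d % m = f % m → d ∈ A :=
    fun d => hC.mem_of_mod_eq_zero_or hm hfC hA hAf
  obtain ⟨i, hi, k, rfl, hk⟩ := hAC.coveredBy hA hc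
  have hkC : k ∈ C := by simpa only [zero_add] using hk 0 hA.1
  have hi_mod : i % m = 0 := by
    by_contra hi0
    have hif : i % m ≠ f % m := fun e =>
      hcA (hAf (Nat.lt_add_right k (hC.lt_of_mem_of_mod_eq hm hfC (hAC.subset hi) e)))
    have hk0 : k % m ≠ 0 := fun e =>
      hcA (hA.mem_of_mod_eq hm hi (Nat.le_add_right i k) (by simp [Nat.add_mod, e]))
    have hkf : k % m ≠ f % m := fun e =>
      hcA (hAf (Nat.lt_add_left i (hC.lt_of_mem_of_mod_eq hm hfC hkC e)))
    exact hcA (hmem _ hc (h i k hi0 hif hk0 hkf))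
  refine hC.mem_of_mod_eq hm (hk n hn) (by omega) ?_
  rw [add_left_comm, Nat.add_mod i, hi_mod, zero_add, Nat.mod_mod]

theorem union_preceq (h : SumsCollapse m f) (hm : m ∈ S) (hA : IsNormalizedIdeal S A)
    (hB : IsNormalizedIdeal S B) (hAf : Set.Ioi f ⊆ A) (hBf : Set.Ioi f ⊆ B)
    (hAC : Preceq S A C) (hBC : Preceq S B C) (hfC : f ∉ C) : Preceq S (A ∪ B) C := by
  have hsub : A ∪ B ⊆ C := Set.union_subset hAC.subset hBC.subset
  refine (preceq_iff_coveredBy (hA.union hB)).2 ⟨hsub, fun c hc => ?_⟩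
  by_cases hcAB : c ∈ A ∪ B
  · exact .of_mem hsub hcAB
  · refine .of_forall_add_mem (.inl hA.1) ?_
    rintro n (hn | hn)
    · exact h.add_mem hm hA hAf hAC hfC hc (hcAB ∘ .inl) hn
    · exact h.add_mem hm hB hBf hBC hfC hc (hcAB ∘ .inr) hn

theorem preceq_union (h : SumsCollapse m f) (hm : m ∈ S) (hA : IsNormalizedIdeal S A)
    (hB : IsNormalizedIdeal S B) (hAf : Set.Ioi f ⊆ A) (hAC : Preceq S A C) (hBC : B ⊆ C)
    (hfC : f ∉ C) : Preceq S A (A ∪ B) := by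
  have hC := hAC.isNormalizedIdeal hA
  have hmem : ∀ d ∈ C, d % m = 0 ∨ d % m = f % m → d ∈ A :=
    fun d => hC.mem_of_mod_eq_zero_or hm hfC hA hAf
  refine (preceq_iff_coveredBy hA).2 ⟨Set.subset_union_left, fun c hc => ?_⟩
  by_cases hcA : c ∈ A
  · exact .of_mem Set.subset_union_left hcA
  have hcB : c ∈ B := hc.resolve_left hcA
  refine .of_forall_add_mem hA.1 fun n hn => ?_
  by_cases hn0 : n % m = 0
  · exact .inr (hB.mem_of_mod_eq hm hcB (Nat.le_add_left c n) (by simp [Nat.add_mod, hn0]))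
  left
  by_cases hnf : n % m = f % m
  · exact hAf (Nat.lt_add_right c (hC.lt_of_mem_of_mod_eq hm hfC (hAC.subset hn) hnf))
  · exact hmem _ (h.add_mem hm hA hAf hAC hfC (hBC hcB) hcA hn)
      (h n c hn0 hnf (fun e => hcA (hmem c (hBC hcB) (.inl e)))
        (fun e => hcA (hmem c (hBC hcB) (.inr e))))

end SumsCollapse

/-! ### Odd Frobenius number over a semigroup containing `4` -/

/-- The coordinates of a normalized ideal `I` whose Frobenius number is the odd number `f`, over a
semigroup containing `4`: `I` contains the multiples of `4`, and `x` and `y` are its least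
elements in the residue classes of `2` and `-f` modulo `4`. -/
structure HasCoords (f : ℕ) (I : Set ℕ) (x y : ℕ) : Prop where
  odd : f % 2 = 1
  x_mod : x % 4 = 2
  y_mod : (y + f) % 4 = 0
  x_le : x ≤ f + 4
  y_le : y ≤ f + 4
  mem_iff : ∀ n, n ∈ I ↔ n % 4 = 0 ∨ n % 4 = f % 4 ∧ f < n ∨ n % 4 = 2 ∧ x ≤ n ∨
    (n + f) % 4 = 0 ∧ y ≤ n

theorem IsNormalizedIdeal.exists_hasCoords (hI : IsNormalizedIdeal S I) (h4 : 4 ∈ S)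
    (hodd : f % 2 = 1) (hIf : Set.Ioi f ⊆ I) (hf : f ∉ I) : ∃ x y, HasCoords f I x y := by
  obtain ⟨x, hx, hx_le, hmem_x⟩ := hI.exists_class_min h4 hIf (show 2 < 4 by norm_num)
  obtain ⟨y, hy, hy_le, hmem_y⟩ := hI.exists_class_min h4 hIf (show 4 - f % 4 < 4 by omega)
  refine ⟨x, y, hodd, hx, by omega, hx_le, hy_le, fun n => ?_⟩
  have hmem_zero : n % 4 = 0 → n ∈ I := hI.mem_of_mod_eq h4 hI.1 n.zero_le ∘ Eq.symm
  have hmem_f : n % 4 = f % 4 → (n ∈ I ↔ f < n) := fun h =>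
    ⟨fun hn => hI.lt_of_mem_of_mod_eq h4 hf hn h, fun hlt => hIf hlt⟩
  specialize hmem_x n
  specialize hmem_y n
  by_cases hn : n ∈ I <;> simp only [hn, imp_false, true_iff, false_iff, imp_true_iff] at * <;>
    omega

namespace HasCoords

theorem zero_mem (h : HasCoords f I x y) : 0 ∈ I :=
  (h.mem_iff 0).2 (.inl rfl)

theorem x_mem (h : HasCoords f I x y) : x ∈ I :=
  (h.mem_iff x).2 (.inr (.inr (.inl ⟨h.x_mod, le_rfl⟩)))

theorem y_mem (h : HasCoords f I x y) : y ∈ I :=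
  (h.mem_iff y).2 (.inr (.inr (.inr ⟨h.y_mod, le_rfl⟩)))

theorem Ioi_subset (h : HasCoords f I x y) : Set.Ioi f ⊆ I := by
  intro n (hn : f < n)
  obtain ⟨hodd, hx, hy, hx_le, hy_le, hmem⟩ := h
  rw [hmem]
  omega

theorem forall_add_mem_iff (h : HasCoords f I x y) (h4 : 4 ∈ S)
    (hJ : IsNormalizedIdeal S J) (hIJ : I ⊆ J) :
    (∀ n ∈ I, n + k ∈ J) ↔ k ∈ J ∧ x + k ∈ J ∧ y + k ∈ J := by
  refine ⟨fun hk => ⟨zero_add k ▸ hk 0 h.zero_mem, hk x h.x_mem, hk y h.y_mem⟩, ?_⟩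
  rintro ⟨hkJ, hxk, hyk⟩ n hn
  have hx := h.x_mod
  have hy := h.y_mod
  obtain hn | ⟨-, hfn⟩ | ⟨hn, hle⟩ | ⟨hn, hle⟩ := (h.mem_iff n).1 hn
  · exact hJ.mem_of_mod_eq h4 hkJ (by omega) (by omega)
  · exact hIJ (h.Ioi_subset (Nat.lt_add_right k hfn))
  · exact hJ.mem_of_mod_eq h4 hxk (by omega) (by omega)
  · exact hJ.mem_of_mod_eq h4 hyk (by omega) (by omega)

theorem coveredBy_iff_of_mod_eq_two (h : HasCoords f I x y) (h4 : 4 ∈ S)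
    (hJ : IsNormalizedIdeal S J) (hIJ : I ⊆ J) (hc : c ∈ J)
    (hmod : c % 4 = 2) :
    CoveredBy I J c ↔ x ≤ c ∨ y + c ∈ J ∨ ∃ k ∈ J, y + k = c ∧ x + k ∈ J := by
  have hodd := h.odd
  have hx := h.x_mod
  have hy := h.y_mod
  have hx_le := h.x_le
  have htranslate {k} := h.forall_add_mem_iff (k := k) h4 hJ hIJ
  constructor
  · rintro ⟨i, hi, k, rfl, hk⟩
    obtain ⟨hkJ, hxk, hyk⟩ := htranslate.1 hk
    obtain hi | ⟨-, hfi⟩ | ⟨-, hle⟩ | ⟨hi, hle⟩ := (h.mem_iff i).1 hi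
    · exact .inr (.inl (hJ.mem_of_mod_eq h4 hyk (by omega) (by omega)))
    · left; omega
    · left; omega
    · refine .inr (.inr ⟨i + k - y, ?_, by omega, ?_⟩)
      · exact hJ.mem_of_mod_eq h4 hkJ (by omega) (by omega)
      · exact hJ.mem_of_mod_eq h4 hxk (by omega) (by omega)
  · rintro (hle | hyc | ⟨k, hkJ, rfl, hxk⟩)
    · exact .of_mem hIJ ((h.mem_iff c).2 (.inr (.inr (.inl ⟨hmod, hle⟩))))
    · refine .of_forall_add_mem h.zero_mem (htranslate.2 ⟨hc, ?_, hyc⟩)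
      exact hJ.mem_of_mod_eq h4 hJ.1 (Nat.zero_le _) (by omega)
    · exact ⟨y, h.y_mem, k, rfl, htranslate.2 ⟨hkJ, hxk, hc⟩⟩

theorem coveredBy_iff_of_add_mod_eq_zero (h : HasCoords f I x y) (h4 : 4 ∈ S)
    (hJ : IsNormalizedIdeal S J) (hIJ : I ⊆ J) (hc : c ∈ J)
    (hmod : (c + f) % 4 = 0) :
    CoveredBy I J c ↔ y ≤ c ∨ (x + c ∈ J ∧ y + c ∈ J) ∨ ∃ k ∈ J, x + k = c := by
  have hodd := h.odd
  have hx := h.x_mod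
  have hy := h.y_mod
  have hy_le := h.y_le
  have htranslate {k} := h.forall_add_mem_iff (k := k) h4 hJ hIJ
  constructor
  · rintro ⟨i, hi, k, rfl, hk⟩
    obtain ⟨hkJ, hxk, hyk⟩ := htranslate.1 hk
    obtain hi | ⟨-, hfi⟩ | ⟨hi, hle⟩ | ⟨-, hle⟩ := (h.mem_iff i).1 hi
    · refine .inr (.inl ⟨?_, ?_⟩)
      · exact hJ.mem_of_mod_eq h4 hxk (by omega) (by omega)
      · exact hJ.mem_of_mod_eq h4 hyk (by omega) (by omega)
    · left; omega
    · refine .inr (.inr ⟨i + k - x, ?_, by omega⟩)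
      exact hJ.mem_of_mod_eq h4 hkJ (by omega) (by omega)
    · left; omega
  · rintro (hle | ⟨hxc, hyc⟩ | ⟨k, hkJ, rfl⟩)
    · exact .of_mem hIJ ((h.mem_iff c).2 (.inr (.inr (.inr ⟨hmod, hle⟩))))
    · exact .of_forall_add_mem h.zero_mem (htranslate.2 ⟨hc, hxc, hyc⟩)
    · refine ⟨x, h.x_mem, k, rfl, htranslate.2 ⟨hkJ, hc, ?_⟩⟩
      exact hJ.mem_of_mod_eq h4 hJ.1 (Nat.zero_le _) (by omega)

theorem add_mem_of_lt_of_lt (h : HasCoords f A x y) (h4 : 4 ∈ S) (hA : IsNormalizedIdeal S A)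
    (hAC : Preceq S A C) (hc : c ∈ C) (hmod : (c + f) % 4 = 0) (hcy : c < y) (hcx : c < x) :
    x + c ∈ C ∧ y + c ∈ C := by
  obtain hle | hmem | ⟨k, -, hk⟩ := (h.coveredBy_iff_of_add_mod_eq_zero h4
    (hAC.isNormalizedIdeal hA) hAC.subset hc hmod).1 (hAC.coveredBy hA hc)
  · omega
  · exact hmem
  · omega

theorem add_mem_of_lt_of_notMem (h : HasCoords f A x y) (h4 : 4 ∈ S)
    (hA : IsNormalizedIdeal S A) (hAC : Preceq S A C) (hc : c ∈ C) (hmod : (c + f) % 4 = 0)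
    (hcy : c < y) (hfC : f ∉ C) : x + c ∈ C ∧ y + c ∈ C := by
  have hC := hAC.isNormalizedIdeal hA
  obtain hle | hmem | ⟨k, hkC, hk⟩ :=
    (h.coveredBy_iff_of_add_mod_eq_zero h4 hC hAC.subset hc hmod).1 (hAC.coveredBy hA hc)
  · omega
  · exact hmem
  · have hodd := h.odd
    have hx := h.x_mod
    have hy_le := h.y_le
    have hfk : f < k := hC.lt_of_mem_of_mod_eq h4 hfC hkC (by omega)
    omega

theorem forall_union_add_mem (hcA : HasCoords f A x y) (hcB : HasCoords f B u v) (h4 : 4 ∈ S)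
    (hC : IsNormalizedIdeal S C) (hAC : A ⊆ C) (hBC : B ⊆ C) (hyv : y ≤ v) (hk : k ∈ C)
    (hxk : x + k ∈ C) (hyk : y + k ∈ C) (huk : u + k ∈ C) : ∀ n ∈ A ∪ B, n + k ∈ C := by
  have hy_mod := hcA.y_mod
  have hv_mod := hcB.y_mod
  have hvk : v + k ∈ C := hC.mem_of_mod_eq h4 hyk (by omega) (by omega)
  rintro n (hn | hn)
  · exact (hcA.forall_add_mem_iff h4 hC hAC).2 ⟨hk, hxk, hyk⟩ n hn
  · exact (hcB.forall_add_mem_iff h4 hC hBC).2 ⟨hk, huk, hvk⟩ n hn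

theorem coveredBy_union_of_mod_eq_two (hcA : HasCoords f A x y) (hcB : HasCoords f B u v)
    (h4 : 4 ∈ S) (hA : IsNormalizedIdeal S A) (hB : IsNormalizedIdeal S B) (hAC : Preceq S A C)
    (hBC : Preceq S B C) (hfC : f ∉ C) (hc : c ∈ C) (hmod : c % 4 = 2) (hx : c < x) (hu : c < u)
    (hyv : y ≤ v) : CoveredBy (A ∪ B) C c := by
  have hC := hAC.isNormalizedIdeal hA
  have hodd := hcA.odd
  have hx_mod := hcA.x_mod
  have hy_mod := hcA.y_mod
  have hu_mod := hcB.x_mod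
  have hv_mod := hcB.y_mod
  have hzero {n} (hn : n % 4 = 0) : n ∈ C := hC.mem_of_mod_eq h4 hC.1 n.zero_le hn.symm
  have htranslate {k} := hcA.forall_union_add_mem (k := k) hcB h4 hC hAC.subset hBC.subset hyv
  by_cases hyc : y + c ∈ C
  · exact .of_forall_add_mem (.inl hA.1)
      (htranslate hc (hzero (by omega)) hyc (hzero (by omega)))
  have hcov_A := hcA.coveredBy_iff_of_mod_eq_two h4 hC hAC.subset hc hmod
  obtain ⟨k, hkC, rfl, hxk⟩ :=
    ((hcov_A.1 (hAC.coveredBy hA hc)).resolve_left hx.not_ge).resolve_left hyc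
  refine ⟨y, .inl hcA.y_mem, k, rfl, htranslate hkC hxk hc ?_⟩
  obtain rfl | hyv := hyv.eq_or_lt
  · have hcov_B := hcB.coveredBy_iff_of_mod_eq_two h4 hC hBC.subset hc hmod
    obtain ⟨l, -, hlk, hul⟩ :=
      ((hcov_B.1 (hBC.coveredBy hB hc)).resolve_left hu.not_ge).resolve_left hyc
    exact Nat.add_left_cancel hlk ▸ hul
  · have hu_add {n} (hn : n ∈ C) (hnf : (n + f) % 4 = 0) (hnv : n < v) : u + n ∈ C :=
      (hcB.add_mem_of_lt_of_notMem h4 hB hBC hn hnf hnv hfC).1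
    obtain hkv | hvk := lt_or_ge k v
    · exact hu_add hkC (by omega) hkv
    · exact hC.mem_of_mod_eq h4 (hu_add (hAC.subset hcA.y_mem) hy_mod hyv) (by omega) (by omega)

theorem coveredBy_union_of_add_mod_eq_zero (hcA : HasCoords f A x y) (hcB : HasCoords f B u v)
    (h4 : 4 ∈ S) (hA : IsNormalizedIdeal S A) (hB : IsNormalizedIdeal S B) (hAC : Preceq S A C)
    (hBC : Preceq S B C) (hfC : f ∉ C) (hc : c ∈ C) (hmod : (c + f) % 4 = 0) (hy : c < y)
    (hv : c < v) : CoveredBy (A ∪ B) C c := by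
  have hC := hAC.isNormalizedIdeal hA
  refine .of_forall_add_mem (.inl hA.1) ?_
  rintro n (hn | hn)
  · exact (hcA.forall_add_mem_iff h4 hC hAC.subset).2
      ⟨hc, hcA.add_mem_of_lt_of_notMem h4 hA hAC hc hmod hy hfC⟩ n hn
  · exact (hcB.forall_add_mem_iff h4 hC hBC.subset).2
      ⟨hc, hcB.add_mem_of_lt_of_notMem h4 hB hBC hc hmod hv hfC⟩ n hn

theorem union_preceq (hcA : HasCoords f A x y) (hcB : HasCoords f B u v) (h4 : 4 ∈ S)
    (hA : IsNormalizedIdeal S A) (hB : IsNormalizedIdeal S B) (hAC : Preceq S A C)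
    (hBC : Preceq S B C) (hfC : f ∉ C) : Preceq S (A ∪ B) C := by
  have hC := hAC.isNormalizedIdeal hA
  have hsub : A ∪ B ⊆ C := Set.union_subset hAC.subset hBC.subset
  refine (preceq_iff_coveredBy (hA.union hB)).2 ⟨hsub, fun c hc => ?_⟩
  by_cases hcAB : c ∈ A ∪ B
  · exact .of_mem hsub hcAB
  rw [Set.mem_union, hcA.mem_iff, hcB.mem_iff] at hcAB
  have hfc : c % 4 = f % 4 → f < c := hC.lt_of_mem_of_mod_eq h4 hfC hc
  have hodd := hcA.odd
  obtain hmod | hmod : c % 4 = 2 ∨ (c + f) % 4 = 0 := by omega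
  · obtain hyv | hvy := le_total y v
    · exact hcA.coveredBy_union_of_mod_eq_two hcB h4 hA hB hAC hBC hfC hc hmod (by omega)
        (by omega) hyv
    · rw [Set.union_comm]
      exact hcB.coveredBy_union_of_mod_eq_two hcA h4 hB hA hBC hAC hfC hc hmod (by omega)
        (by omega) hvy
  · exact hcA.coveredBy_union_of_add_mod_eq_zero hcB h4 hA hB hAC hBC hfC hc hmod
      (by omega) (by omega)

theorem coveredBy_union_left_of_mod_eq_two (hcA : HasCoords f A x y) (hcB : HasCoords f B u v)
    (h4 : 4 ∈ S) (hA : IsNormalizedIdeal S A) (hB : IsNormalizedIdeal S B) (hAC : Preceq S A C)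
    (hBC : Preceq S B C) (hfC : f ∉ C) (hc : c ∈ B) (hmod : c % 4 = 2) :
    CoveredBy A (A ∪ B) c := by
  have hC := hAC.isNormalizedIdeal hA
  have hodd := hcA.odd
  have hx_mod := hcA.x_mod
  have hy_mod := hcA.y_mod
  have hlt {n} (hn : n ∈ C) (hnf : n % 4 = f % 4) : f < n := hC.lt_of_mem_of_mod_eq h4 hfC hn hnf
  have hmem {n} (hn : f < n) : n ∈ A ∪ B := .inl (hcA.Ioi_subset hn)
  refine (hcA.coveredBy_iff_of_mod_eq_two h4 (hA.union hB) Set.subset_union_left (.inr hc)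
    hmod).2 ?_
  obtain hle | hyc | ⟨k, hkC, rfl, hxk⟩ := (hcA.coveredBy_iff_of_mod_eq_two h4 hC hAC.subset
    (hBC.subset hc) hmod).1 (hAC.coveredBy hA (hBC.subset hc))
  · exact .inl hle
  · exact .inr (.inl (hmem (hlt hyc (by omega))))
  · by_cases hk : k ∈ A ∪ B
    · exact .inr (.inr ⟨k, hk, rfl, hmem (hlt hxk (by omega))⟩)
    rw [Set.mem_union, hcA.mem_iff, hcB.mem_iff] at hk
    have huk := (hcB.add_mem_of_lt_of_notMem h4 hB hBC hkC (by omega) (by omega) hfC).1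
    have hu_mod := hcB.x_mod
    have hfuk : f < u + k := hlt huk (by omega)
    have huc := (hcB.mem_iff _).1 hc
    exact .inr (.inl (hmem (by omega)))

theorem coveredBy_union_left_of_add_mod_eq_zero (hcA : HasCoords f A x y) (h4 : 4 ∈ S)
    (hA : IsNormalizedIdeal S A) (hB : IsNormalizedIdeal S B) (hAC : Preceq S A C)
    (hBC : B ⊆ C) (hfC : f ∉ C) (hc : c ∈ B) (hmod : (c + f) % 4 = 0)
    (hyc : c < y → y + c ∈ A ∪ B) : CoveredBy A (A ∪ B) c := by
  refine (hcA.coveredBy_iff_of_add_mod_eq_zero h4 (hA.union hB) Set.subset_union_left (.inr hc)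
    hmod).2 ?_
  obtain hle | hcy := le_or_gt y c
  · exact .inl hle
  have hxc := (hcA.add_mem_of_lt_of_notMem h4 hA hAC (hBC hc) hmod hcy hfC).1
  have hodd := hcA.odd
  have hx_mod := hcA.x_mod
  have hfxc : f < x + c :=
    (hAC.isNormalizedIdeal hA).lt_of_mem_of_mod_eq h4 hfC hxc (by omega)
  exact .inr (.inl ⟨.inl (hcA.Ioi_subset hfxc), hyc hcy⟩)

theorem preceq_union_of_forall_add_mem (hcA : HasCoords f A x y) (hcB : HasCoords f B u v)
    (h4 : 4 ∈ S) (hA : IsNormalizedIdeal S A) (hB : IsNormalizedIdeal S B) (hAC : Preceq S A C)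
    (hBC : Preceq S B C) (hfC : f ∉ C)
    (hy : ∀ c ∈ B, (c + f) % 4 = 0 → c < y → y + c ∈ A ∪ B) : Preceq S A (A ∪ B) := by
  refine (preceq_iff_coveredBy hA).2 ⟨Set.subset_union_left, fun c hc => ?_⟩
  by_cases hcmem : c ∈ A
  · exact .of_mem Set.subset_union_left hcmem
  have hcmemB : c ∈ B := hc.resolve_left hcmem
  have hB_iff := (hcB.mem_iff c).1 hcmemB
  rw [hcA.mem_iff] at hcmem
  obtain hmod | hmod : c % 4 = 2 ∨ (c + f) % 4 = 0 := by omega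
  · exact hcA.coveredBy_union_left_of_mod_eq_two hcB h4 hA hB hAC hBC hfC hcmemB hmod
  · exact hcA.coveredBy_union_left_of_add_mod_eq_zero h4 hA hB hAC hBC.subset hfC hcmemB hmod
      (hy c hcmemB hmod)

-- The inequalities of the second alternative are what makes `A + B` have coordinates `(y + v, v)`.
theorem preceq_union_or_lt (hcA : HasCoords f A x y) (hcB : HasCoords f B u v) (h4 : 4 ∈ S)
    (hA : IsNormalizedIdeal S A) (hB : IsNormalizedIdeal S B) (hAC : Preceq S A C)
    (hBC : Preceq S B C) (hfC : f ∉ C) :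
    Preceq S A (A ∪ B) ∨ v < y ∧ y + v < x ∧ y + v < u ∧ f < x + v ∧ f < u + y := by
  by_cases hy : ∀ c ∈ B, (c + f) % 4 = 0 → c < y → y + c ∈ A ∪ B
  · exact .inl (hcA.preceq_union_of_forall_add_mem hcB h4 hA hB hAC hBC hfC hy)
  right
  push Not at hy
  obtain ⟨c, hcmemB, hcf, hcy, hyc⟩ := hy
  have hC := hAC.isNormalizedIdeal hA
  have hodd := hcA.odd
  have hx_mod := hcA.x_mod
  have hy_mod := hcA.y_mod
  have hu_mod := hcB.x_mod
  have hv_mod := hcB.y_mod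
  have hlt {n} (hn : n ∈ C) (hnf : n % 4 = f % 4) : f < n := hC.lt_of_mem_of_mod_eq h4 hfC hn hnf
  have hvc : v ≤ c := by
    have := (hcB.mem_iff c).1 hcmemB
    omega
  rw [Set.mem_union, hcA.mem_iff, hcB.mem_iff] at hyc
  obtain ⟨hxv, hyv⟩ := hcA.add_mem_of_lt_of_notMem h4 hA hAC (hBC.subset hcB.y_mem) hv_mod
    (by omega) hfC
  have hfxv : f < x + v := hlt hxv (by omega)
  refine ⟨by omega, by omega, by omega, hfxv, ?_⟩
  obtain hle | hvyv | ⟨k, -, hk, huk⟩ := (hcB.coveredBy_iff_of_mod_eq_two h4 hC hBC.subset hyv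
    (by omega)).1 (hBC.coveredBy hB hyv)
  · omega
  · have := hlt hvyv (by omega)
    omega
  · have := hlt huk (by omega)
    omega

theorem add (hcA : HasCoords f A x y) (hcB : HasCoords f B u v) (hvy : v < y)
    (hx : y + v < x) (hu : y + v < u) (hfx : f < x + v) (hfu : f < u + y) :
    HasCoords f (A + B) (y + v) v := by
  have hodd := hcA.odd
  have hx_mod := hcA.x_mod
  have hy_mod := hcA.y_mod
  have hx_le := hcA.x_le
  have hu_mod := hcB.x_mod
  have hv_mod := hcB.y_mod
  refine ⟨hodd, by omega, hv_mod, by omega, hcB.y_le, fun n => ?_⟩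
  rw [Set.mem_add]
  refine ⟨?_, fun hn => ?_⟩
  · rintro ⟨a, ha, b, hb, rfl⟩
    have ha := (hcA.mem_iff a).1 ha
    have hb := (hcB.mem_iff b).1 hb
    omega
  · obtain hn | hn | hn | hn := hn
    · exact ⟨n, (hcA.mem_iff n).2 (.inl hn), 0, hcB.zero_mem, rfl⟩
    · exact ⟨n, (hcA.mem_iff n).2 (.inr (.inl hn)), 0, hcB.zero_mem, rfl⟩
    · exact ⟨y, hcA.y_mem, n - y, (hcB.mem_iff _).2 (by omega), by omega⟩
    · exact ⟨0, hcA.zero_mem, n, (hcB.mem_iff n).2 (.inr (.inr (.inr hn))), zero_add n⟩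

theorem add_subset (hcA : HasCoords f A x y) (hcB : HasCoords f B u v) (h4 : 4 ∈ S)
    (hA : IsNormalizedIdeal S A) (hAC : Preceq S A C) (hBC : B ⊆ C)
    (hcAB : HasCoords f (A + B) (y + v) v) (hvy : v < y) (hx : y + v < x) : A + B ⊆ C := by
  have hC := hAC.isNormalizedIdeal hA
  have hyv : y + v ∈ C :=
    (hcA.add_mem_of_lt_of_lt h4 hA hAC (hBC hcB.y_mem) hcB.y_mod hvy (by omega)).2
  have hmod := hcAB.x_mod
  intro n hn
  obtain hn | hn | hn | hn := (hcAB.mem_iff n).1 hn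
  · exact hC.mem_of_mod_eq h4 hC.1 n.zero_le hn.symm
  · exact hAC.subset (hcA.Ioi_subset hn.2)
  · exact hC.mem_of_mod_eq h4 hyv hn.2 (by omega)
  · exact hBC ((hcB.mem_iff n).2 (.inr (.inr (.inr hn))))

theorem coveredBy_add_of_mod_eq_two (hcA : HasCoords f A x y) (hcB : HasCoords f B u v)
    (h4 : 4 ∈ S) (hA : IsNormalizedIdeal S A) (hB : IsNormalizedIdeal S B) (hAC : Preceq S A C)
    (hBC : Preceq S B C) (hcAB : HasCoords f (A + B) (y + v) v) (hsub : A + B ⊆ C)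
    (hvy : v < y) (hx : y + v < x) (hu : y + v < u) (hc : c ∈ C) (hmod : c % 4 = 2)
    (hmin : ∀ d ∈ C, d % 4 = c % 4 → c ≤ d) : CoveredBy (A + B) C c := by
  have hC := hAC.isNormalizedIdeal hA
  have hy_mod := hcA.y_mod
  have hv_mod := hcB.y_mod
  have hodd := hcA.odd
  refine (hcAB.coveredBy_iff_of_mod_eq_two h4 hC hsub hc hmod).2 ?_
  obtain hle | hlt := le_or_gt (y + v) c
  · exact .inl hle
  right
  obtain hle | hvc | ⟨k, hkC, hvk, -⟩ := (hcB.coveredBy_iff_of_mod_eq_two h4 hC hBC.subset hc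
    hmod).1 (hBC.coveredBy hB hc)
  · omega
  · exact .inl hvc
  obtain hle | hyc | ⟨l, hlC, hyl, -⟩ := (hcA.coveredBy_iff_of_mod_eq_two h4 hC hAC.subset hc
    hmod).1 (hAC.coveredBy hA hc)
  · omega
  · exact .inr ⟨k, hkC, hvk, by rwa [add_assoc, hvk]⟩
  · have hvl := (hcB.add_mem_of_lt_of_lt h4 hB hBC hlC (by omega) (by omega) (by omega)).2
    have := hmin _ hvl (by omega)
    omega

theorem coveredBy_add_of_add_mod_eq_zero (hcA : HasCoords f A x y) (hcB : HasCoords f B u v)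
    (h4 : 4 ∈ S) (hA : IsNormalizedIdeal S A) (hB : IsNormalizedIdeal S B) (hAC : Preceq S A C)
    (hBC : Preceq S B C) (hcAB : HasCoords f (A + B) (y + v) v) (hsub : A + B ⊆ C)
    (hvy : v < y) (hx : y + v < x) (hu : y + v < u) (hc : c ∈ C) (hmod : (c + f) % 4 = 0)
    (hmin : ∀ d ∈ C, d % 4 = c % 4 → c ≤ d) : CoveredBy (A + B) C c := by
  have hC := hAC.isNormalizedIdeal hA
  have hy_mod := hcA.y_mod
  have hv_mod := hcB.y_mod
  have hodd := hcA.odd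
  refine (hcAB.coveredBy_iff_of_add_mod_eq_zero h4 hC hsub hc hmod).2 ?_
  obtain hle | hcv := le_or_gt v c
  · exact .inl hle
  have hvc : v + c ∈ C := (hcB.add_mem_of_lt_of_lt h4 hB hBC hc hmod hcv (by omega)).2
  obtain hle | hyvc | ⟨l, hlC, hyl, -⟩ := (hcA.coveredBy_iff_of_mod_eq_two h4 hC hAC.subset hvc
    (by omega)).1 (hAC.coveredBy hA hvc)
  · omega
  · exact .inr (.inl ⟨by rwa [add_assoc], hvc⟩)
  · have := hmin l hlC (by omega)
    omega

theorem add_preceq (hcA : HasCoords f A x y) (hcB : HasCoords f B u v) (h4 : 4 ∈ S)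
    (hA : IsNormalizedIdeal S A) (hB : IsNormalizedIdeal S B) (hAC : Preceq S A C)
    (hBC : Preceq S B C) (hvy : v < y) (hx : y + v < x) (hu : y + v < u) (hfx : f < x + v)
    (hfu : f < u + y) : Preceq S (A + B) C := by
  have hC := hAC.isNormalizedIdeal hA
  have hcAB := hcA.add hcB hvy hx hu hfx hfu
  have hsub := hcA.add_subset hcB h4 hA hAC hBC.subset hcAB hvy hx
  refine preceq_of_forall_minimal (hA.add hB) hC h4 hsub fun c hc hmin => ?_
  have hodd := hcA.odd
  have hyv_mod := hcAB.x_mod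
  have hv_mod := hcB.y_mod
  obtain hmod | hmod | hmod | hmod :
      c % 4 = 0 ∨ c % 4 = f % 4 ∨ c % 4 = 2 ∨ (c + f) % 4 = 0 := by omega
  · exact .of_mem hsub ((hcAB.mem_iff c).2 (.inl hmod))
  · refine .of_forall_add_mem hcAB.zero_mem
      ((hcAB.forall_add_mem_iff h4 hC hsub).2 ⟨hc, ?_, ?_⟩)
    · exact hC.mem_of_mod_eq h4 (hBC.subset hcB.y_mem) (by omega) (by omega)
    · exact hC.mem_of_mod_eq h4 hC.1 (Nat.zero_le _) (by omega)
  · exact hcA.coveredBy_add_of_mod_eq_two hcB h4 hA hB hAC hBC hcAB hsub hvy hx hu hc hmod hmin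
  · exact hcA.coveredBy_add_of_add_mod_eq_zero hcB h4 hA hB hAC hBC hcAB hsub hvy hx hu hc hmod hmin

end HasCoords

/-! ### Suprema and infima -/

theorem union_preceq_of_notMem (hm : m ∈ S) (hm0 : m ≠ 0) (hm4 : m ≤ 4)
    (hA : IsNormalizedIdeal S A) (hB : IsNormalizedIdeal S B) (hAf : Set.Ioi f ⊆ A)
    (hBf : Set.Ioi f ⊆ B) (hAC : Preceq S A C) (hBC : Preceq S B C) (hfC : f ∉ C) :
    Preceq S (A ∪ B) C := by
  have hf : f % m ≠ 0 := (hAC.isNormalizedIdeal hA).mod_ne_zero hm hfC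
  obtain hcollapse | ⟨rfl, hodd⟩ := sumsCollapse_or_odd hm0 hm4 hf
  · exact hcollapse.union_preceq hm hA hB hAf hBf hAC hBC hfC
  · obtain ⟨x, y, hcA⟩ := hA.exists_hasCoords hm hodd hAf (hfC <| hAC.subset ·)
    obtain ⟨u, v, hcB⟩ := hB.exists_hasCoords hm hodd hBf (hfC <| hBC.subset ·)
    exact hcA.union_preceq hcB hm hA hB hAC hBC hfC

theorem preceq_union_or_forall_add_preceq (hm : m ∈ S) (hm0 : m ≠ 0) (hm4 : m ≤ 4)
    (hA : IsNormalizedIdeal S A) (hB : IsNormalizedIdeal S B) (hAf : Set.Ioi f ⊆ A)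
    (hBf : Set.Ioi f ⊆ B) (hAC : Preceq S A C) (hBC : Preceq S B C) (hfC : f ∉ C) :
    Preceq S A (A ∪ B) ∨ ∀ L, Preceq S A L → Preceq S B L → Preceq S (A + B) L := by
  have hf : f % m ≠ 0 := (hAC.isNormalizedIdeal hA).mod_ne_zero hm hfC
  obtain hcollapse | ⟨rfl, hodd⟩ := sumsCollapse_or_odd hm0 hm4 hf
  · exact .inl (hcollapse.preceq_union hm hA hB hAf hAC hBC.subset hfC)
  · obtain ⟨x, y, hcA⟩ := hA.exists_hasCoords hm hodd hAf (hfC <| hAC.subset ·)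
    obtain ⟨u, v, hcB⟩ := hB.exists_hasCoords hm hodd hBf (hfC <| hBC.subset ·)
    refine (hcA.preceq_union_or_lt hcB hm hA hB hAC hBC hfC).imp_right ?_
    rintro ⟨hvy, hx, hu, hfx, hfu⟩ L hAL hBL
    exact hcA.add_preceq hcB hm hA hB hAL hBL hvy hx hu hfx hfu

theorem union_preceq (hm : m ∈ S) (hm0 : m ≠ 0) (hm4 : m ≤ 4) (hA : IsNormalizedIdeal S A)
    (hB : IsNormalizedIdeal S B) (hAn : Set.Ici n ⊆ A) (hBn : Set.Ici n ⊆ B)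
    (hAC : Preceq S A C) (hBC : Preceq S B C) : Preceq S (A ∪ B) C := by
  induction n generalizing A B with
  | zero =>
    have hC : A ∪ B = C := (Set.union_subset hAC.subset hBC.subset).antisymm fun c _ =>
      .inl (hAn c.zero_le)
    exact hC ▸ preceq_refl (hA.union hB)
  | succ f ih =>
    by_cases hfC : f ∈ C
    · have hABf : Set.Ioi f ⊆ A ∪ B := fun k hk => .inl (hAn hk)
      refine (preceq_insert (hA.union hB) hABf).trans ?_
      rw [Set.insert_union_distrib]
      exact ih (hA.insert hAn) (hB.insert hBn) (Ici_subset_insert hAn) (Ici_subset_insert hBn)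
        (hAC.insert_left hA hAn hfC) (hBC.insert_left hB hBn hfC)
    · exact union_preceq_of_notMem hm hm0 hm4 hA hB hAn hBn hAC hBC hfC

theorem isSupNI_add (hA : IsNormalizedIdeal S A) (hB : IsNormalizedIdeal S B)
    (h : ∀ L, Preceq S A L → Preceq S B L → Preceq S (A + B) L) : IsSupNI S A B (A + B) :=
  ⟨hA.add hB, preceq_add_right hB, preceq_add_left hA, fun L _ => h L⟩

theorem exists_isSupNI_of_notMem (hm : m ∈ S) (hm0 : m ≠ 0) (hm4 : m ≤ 4)
    (hA : IsNormalizedIdeal S A) (hB : IsNormalizedIdeal S B) (hAf : Set.Ioi f ⊆ A)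
    (hBf : Set.Ioi f ⊆ B) (hAC : Preceq S A C) (hBC : Preceq S B C) (hfC : f ∉ C) :
    ∃ M, IsSupNI S A B M := by
  obtain hA_union | hadd :=
    preceq_union_or_forall_add_preceq hm hm0 hm4 hA hB hAf hBf hAC hBC hfC
  · obtain hB_union | hadd :=
      preceq_union_or_forall_add_preceq hm hm0 hm4 hB hA hBf hAf hBC hAC hfC
    · exact ⟨A ∪ B, hA.union hB, hA_union, Set.union_comm B A ▸ hB_union, fun L _ =>
        union_preceq (n := f + 1) hm hm0 hm4 hA hB hAf hBf⟩
    · exact ⟨A + B, isSupNI_add hA hB fun L hAL hBL => add_comm B A ▸ hadd L hBL hAL⟩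
  · exact ⟨A + B, isSupNI_add hA hB hadd⟩

theorem exists_isSupNI_of_Ici_subset (hm : m ∈ S) (hm0 : m ≠ 0) (hm4 : m ≤ 4)
    (hA : IsNormalizedIdeal S A) (hB : IsNormalizedIdeal S B) (hAn : Set.Ici n ⊆ A)
    (hBn : Set.Ici n ⊆ B) : ∃ M, IsSupNI S A B M := by
  induction n generalizing A B with
  | zero =>
    have hAB : A = B := Set.ext fun k => iff_of_true (hAn k.zero_le) (hBn k.zero_le)
    exact ⟨A, hA, preceq_refl hA, hAB ▸ preceq_refl hA, fun L _ hAL _ => hAL⟩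
  | succ f ih =>
    by_cases hbound : ∃ C, Preceq S A C ∧ Preceq S B C ∧ f ∉ C
    · obtain ⟨C, hAC, hBC, hfC⟩ := hbound
      exact exists_isSupNI_of_notMem hm hm0 hm4 hA hB hAn hBn hAC hBC hfC
    · push Not at hbound
      obtain ⟨M, hM, hAM, hBM, hleast⟩ := ih (hA.insert hAn) (hB.insert hBn)
        (Ici_subset_insert hAn) (Ici_subset_insert hBn)
      refine ⟨M, hM, (preceq_insert hA hAn).trans hAM, (preceq_insert hB hBn).trans hBM,
        fun L hL hAL hBL => ?_⟩
      have hfL := hbound L hAL hBL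
      exact hleast L hL (hAL.insert_left hA hAn hfL) (hBL.insert_left hB hBn hfL)

theorem IsNumericalSemigroup.exists_Ici_subset (hS : IsNumericalSemigroup S) :
    ∃ n, Set.Ici n ⊆ S := by
  obtain ⟨n, hn⟩ := hS.2.2.bddAbove
  exact ⟨n + 1, fun k hk => by_contra fun hkS => Nat.not_succ_le_self n (le_trans hk (hn hkS))⟩

theorem exists_isSupNI (hS : IsNumericalSemigroup S) (hm : m ∈ S) (hm0 : m ≠ 0) (hm4 : m ≤ 4)
    (hI : IsNormalizedIdeal S I) (hJ : IsNormalizedIdeal S J) : ∃ M, IsSupNI S I J M := by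
  obtain ⟨n, hn⟩ := hS.exists_Ici_subset
  exact exists_isSupNI_of_Ici_subset hm hm0 hm4 hI hJ (hn.trans hI.subset) (hn.trans hJ.subset)

theorem NI_finite (hS : IsNumericalSemigroup S) : (NI S).Finite := by
  refine (hS.2.2.finite_subsets.image (· ∪ S)).subset fun I (hI : IsNormalizedIdeal S I) => ?_
  exact ⟨I \ S, fun _ hn => hn.2, Set.sdiff_union_of_subset hI.subset⟩

theorem exists_isInfNI_of_forall_exists_isSupNI (hS : IsNumericalSemigroup S)
    (hsup : ∀ K L, IsNormalizedIdeal S K → IsNormalizedIdeal S L → ∃ M, IsSupNI S K L M)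
    (hI : IsNormalizedIdeal S I) (hJ : IsNormalizedIdeal S J) : ∃ M, IsInfNI S I J M := by
  let Lower := {L : Set ℕ // IsNormalizedIdeal S L ∧ Preceq S L I ∧ Preceq S L J}
  have : Nonempty Lower :=
    ⟨S, hS.isNormalizedIdeal_self, self_preceq hS hI, self_preceq hS hJ⟩
  have : Finite Lower := ((NI_finite hS).subset fun L hL => hL.1).to_subtype
  have hdirected : Directed (Preceq S) (Subtype.val : Lower → Set ℕ) := by
    rintro ⟨K, hK, hKI, hKJ⟩ ⟨L, hL, hLI, hLJ⟩
    obtain ⟨M, hM, hKM, hLM, hleast⟩ := hsup K L hK hL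
    exact ⟨⟨M, hM, hleast I hI hKI hLI, hleast J hJ hKJ hLJ⟩, hKM, hLM⟩
  obtain ⟨⟨M, hM, hMI, hMJ⟩, hgreatest⟩ := hdirected.finite_le id
  exact ⟨M, hM, hMI, hMJ, fun L hL hLI hLJ => hgreatest ⟨L, hL, hLI, hLJ⟩⟩

theorem isNormalizedIdeal_compl (hS : ∀ s ∈ S, s ≠ 0 → n ≤ s) (hI0 : 0 ∉ I)
    (hI : ∀ i ∈ I, i < n) : IsNormalizedIdeal S Iᶜ := by
  refine ⟨hI0, fun i hi s hs => ?_⟩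
  obtain rfl | hs0 := eq_or_ne s 0
  · exact hi
  · exact fun his => (hI _ his).not_ge (le_add_left (hS s hs hs0))

theorem IsNumericalSemigroup.multNS_mem (hS : IsNumericalSemigroup S) :
    multNS S ∈ S ∧ multNS S ≠ 0 := by
  obtain ⟨n, hn⟩ := hS.exists_Ici_subset
  exact Nat.sInf_mem (s := {n | n ∈ S ∧ n ≠ 0}) ⟨n + 1, hn n.le_succ, n.succ_ne_zero⟩

theorem multNS_le (hn : n ∈ S) (hn0 : n ≠ 0) : multNS S ≤ n :=
  Nat.sInf_le ⟨hn, hn0⟩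

-- Both `{2}ᶜ` and `{4}ᶜ` are common upper bounds, so a supremum would be contained in `{2, 4}ᶜ`,
-- which is not above `{2, 3, 4}ᶜ` because no translate of the latter inside it passes through `3`.
theorem not_exists_isSupNI_of_five_le (hS : ∀ s ∈ S, s ≠ 0 → 5 ≤ s) :
    ¬ ∃ M, IsSupNI S {2, 4}ᶜ {2, 3, 4}ᶜ M := by
  rintro ⟨M, -, hAM, hBM, hleast⟩
  have hA : IsNormalizedIdeal S {2, 4}ᶜ := isNormalizedIdeal_compl hS (by simp) (by simp)
  have hB : IsNormalizedIdeal S {2, 3, 4}ᶜ := isNormalizedIdeal_compl hS (by simp) (by simp)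
  have hM_two : Preceq S M {2}ᶜ := by
    refine hleast _ (isNormalizedIdeal_compl hS (by simp) (by simp)) ?_ ?_
    · exact preceq_of_translate (k := 4) hA (by grind) (by grind) (by grind)
    · exact preceq_of_translate (k := 3) hB (by grind) (by grind) (by grind)
  have hM_four : Preceq S M {4}ᶜ := by
    refine hleast _ (isNormalizedIdeal_compl hS (by simp) (by simp)) ?_ ?_
    · exact preceq_of_translate (k := 2) hA (by grind) (by grind) (by grind)
    · exact preceq_of_translate (k := 2) hB (by grind) (by grind) (by grind)
  have hM_notMem : 2 ∉ M ∧ 4 ∉ M := ⟨fun h => hM_two.subset h rfl, fun h => hM_four.subset h rfl⟩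
  obtain ⟨i, hi, k, hik, hk⟩ := hBM.coveredBy hB (hAM.subset (show 3 ∈ ({2, 4} : Set ℕ)ᶜ by simp))
  have hk0 : 0 + k ∈ M := hk 0 (by simp)
  have hk1 : 1 + k ∈ M := hk 1 (by simp)
  have hk_cases : k = 3 ∨ k = 2 := by grind
  grind

theorem not_NILattice_of_five_le (hS : ∀ s ∈ S, s ≠ 0 → 5 ≤ s) : ¬ NILattice S := fun h =>
  not_exists_isSupNI_of_five_le hS (h _ _
    (isNormalizedIdeal_compl hS (by simp) (by simp))
    (isNormalizedIdeal_compl hS (by simp) (by simp))).1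

end NormalizedIdeals

/-- Corollary: `(𝔑(S), ⪯)` is a lattice if and only if
`m(S) ≤ 4`. -/
theorem NILattice_iff_mult_le_four (S : Set ℕ) (hS : IsNumericalSemigroup S) :
    NILattice S ↔ multNS S ≤ 4 := by
  obtain ⟨hmem, hne⟩ := hS.multNS_mem
  constructor
  · intro hlattice
    by_contra! hlt
    exact not_NILattice_of_five_le (fun s hs hs0 => hlt.trans_le (multNS_le hs hs0)) hlattice
  · intro hle
    have hsup : ∀ I J, IsNormalizedIdeal S I → IsNormalizedIdeal S J → ∃ M, IsSupNI S I J M :=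
      fun I J hI hJ => exists_isSupNI hS hmem hne hle hI hJ
    exact fun I J hI hJ =>
      ⟨hsup I J hI hJ, exists_isInfNI_of_forall_exists_isSupNI hS hsup hI hJ⟩
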